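/- Let u₀ ∈ L²(ℝ^d), T > 0 and N > 0, and let u be the heat solution with initial datum u₀. Then the family (u(T, n/N)·f_{N,n})_{n∈ℤ^d} is summable in L²(ℝ^d) with sum equal to u(T,·) if and only if u₀ ∈ 𝒫_N, i.e. supp û₀ ⊆ Q_{πN}(0). -/

import Mathlib

open MeasureTheory Filter Topology Metric ENNReal NNReal

noncomputable section

/-- `sinc` with value 1 at 0. -/
def sinc' (x : ℝ) : ℝ := if x = 0 then 1 else Real.sin x / x

/-- The function `f_{N,n}(x) = ∏_j sin (π (N x_j - n_j)) / (π (N x_j - n_j))`. -/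
def fN (d : ℕ) (N : ℝ) (n : Fin d → ℤ) (x : EuclideanSpace ℝ (Fin d)) : ℝ :=
  ∏ j, sinc' (Real.pi * (N * x j - n j))

/-- The lattice point `n / N` in `ℝ^d`. -/
def latticePt (d : ℕ) (N : ℝ) (n : Fin d → ℤ) : EuclideanSpace ℝ (Fin d) :=
  WithLp.toLp 2 (fun j => (n j : ℝ) / N)

/-- The heat solution at time `t > 0` with initial datum `u₀ ∈ L²(ℝ^d)`:
`u(t,x) = (4πt)^{-d/2} ∫ e^{-|x-y|²/(4t)} u₀(y) dy`. -/
def heatSol (d : ℕ) (u₀ : EuclideanSpace ℝ (Fin d) → ℝ) (t : ℝ)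
    (x : EuclideanSpace ℝ (Fin d)) : ℝ :=
  (4 * Real.pi * t) ^ (-(d : ℝ) / 2) * ∫ y, Real.exp (-‖x - y‖ ^ 2 / (4 * t)) * u₀ y

/-- The family `F` is summable in `L²(ℝ^d)` with sum `g`: the finite partial sums
converge to `g` in the `L²` norm along the filter of finite subsets of `ℤ^d`. -/
def HasSumL2 (d : ℕ) {V : Type} [NormedAddCommGroup V]
    (F : (Fin d → ℤ) → EuclideanSpace ℝ (Fin d) → V)
    (g : EuclideanSpace ℝ (Fin d) → V) : Prop :=
  Tendsto (fun s : Finset (Fin d → ℤ) =>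
    eLpNorm (fun x => g x - ∑ n ∈ s, F n x) 2 volume) atTop (𝓝 0)

/-- The closed cube `Q_r(0)` in `ℝ^d`, centered at the origin, of side length `2r`. -/
def Qcube (d : ℕ) (r : ℝ) : Set (EuclideanSpace ℝ (Fin d)) := {ξ | ∀ j, |ξ j| ≤ r}

/-- The truncated Fourier integral, with the paper's normalization
`(2π)^{-d/2} ∫_{|x| ≤ R} e^{-i x·ξ} f(x) dx`. -/
def truncFT (d : ℕ) (f : EuclideanSpace ℝ (Fin d) → ℂ) (R : ℝ)
    (ξ : EuclideanSpace ℝ (Fin d)) : ℂ :=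
  (((2 * Real.pi) ^ (-(d : ℝ) / 2) : ℝ) : ℂ) *
    ∫ x in closedBall (0 : EuclideanSpace ℝ (Fin d)) R,
      Complex.exp (-(Complex.I * ((inner ℝ x ξ : ℝ) : ℂ))) * f x

/-- `fhat` is the Fourier transform of `f ∈ L²(ℝ^d)` in the `L²` (Plancherel) sense:
`fhat ∈ L²` and the Fourier integrals of the truncations of `f` converge to `fhat`
in the `L²` norm. -/
def IsL2Fourier (d : ℕ) (f fhat : EuclideanSpace ℝ (Fin d) → ℂ) : Prop :=
  MemLp fhat 2 volume ∧
    Tendsto (fun R : ℝ => eLpNorm (fun ξ => fhat ξ - truncFT d f R ξ) 2 volume)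
      atTop (𝓝 0)

/-- The `L²(ℝ^d)` norm of a function, as a real number. -/
def l2norm (d : ℕ) {V : Type} [NormedAddCommGroup V]
    (f : EuclideanSpace ℝ (Fin d) → V) : ℝ :=
  (eLpNorm f 2 volume).toReal

/-!
Up to the normalisation of the Fourier transform, which turns the cube of half-side `πN` into that
of half-side `N / 2`, `u(T, ·)` is the inverse Fourier transform of `g = G û₀`, where `G` is a
Gaussian. The function `f_{N,n}` is the inverse Fourier transform of a normalised character of the
cube `Q_{N/2}(0)` extended by zero, and `u(T, n/N)` is the corresponding Fourier coefficient of `g`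
when `g` is supported in the cube. By Plancherel, the expansion of `u(T, ·)` thus converges if `g`
vanishes off the cube, being the image of its Fourier series there. Conversely every partial sum of
the transformed expansion vanishes off the cube, and hence so does its `L²` limit `g`. Since `G` has
no zeros, `g` and `û₀` vanish off the cube simultaneously.
-/

section FourierLp

open FourierTransform SchwartzMap

variable {E F : Type*} [NormedAddCommGroup E] [InnerProductSpace ℝ E] [FiniteDimensional ℝ E]
  [MeasurableSpace E] [BorelSpace E] [NormedAddCommGroup F]

lemma ae_eq_of_integral_schwartz_smul_eq [NormedSpace ℂ F] [CompleteSpace F] {μ : Measure E}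
    {f g : E → F} (hf : LocallyIntegrable f μ) (hg : LocallyIntegrable g μ)
    (h : ∀ φ : 𝓢(E, ℂ), ∫ x, φ x • f x ∂μ = ∫ x, φ x • g x ∂μ) : f =ᵐ[μ] g := by
  refine ae_eq_of_integral_contDiff_smul_eq hf hg fun φ hφ hφc ↦ ?_
  have hsupp : HasCompactSupport (Complex.ofRealCLM ∘ φ) := hφc.comp_left rfl
  exact h (hsupp.toSchwartzMap (by fun_prop))

variable [InnerProductSpace ℂ F] [CompleteSpace F] {f : E → F}

lemma fourier_toLp_ae_eq (hf : Integrable f) (hf2 : MemLp f 2) :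
    (𝓕 (hf2.toLp f) : Lp F 2 (volume : Measure E)) =ᵐ[volume] 𝓕 f := by
  have hcont : Continuous (𝓕 f) := VectorFourier.fourierIntegral_continuous
    Real.continuous_fourierChar (L := innerₗ E) continuous_inner hf
  refine ae_eq_of_integral_schwartz_smul_eq ((Lp.memLp _).locallyIntegrable one_le_two)
    hcont.locallyIntegrable fun φ ↦ ?_
  have hdual := DFunLike.congr_fun (Lp.fourier_toTemperedDistribution_eq (hf2.toLp f)) φ
  simp only [TemperedDistribution.fourier_apply, Lp.toTemperedDistribution_apply] at hdual
  calc ∫ x, φ x • (𝓕 (hf2.toLp f) : Lp F 2 (volume : Measure E)) x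
      = ∫ x, 𝓕 φ x • hf2.toLp f x := hdual.symm
    _ = ∫ x, 𝓕 φ x • f x := integral_congr_ae (hf2.coeFn_toLp.mono fun x hx ↦ by simp only [hx])
    _ = ∫ x, φ x • 𝓕 f x := by
      rw [fourier_coe]
      simpa only [flip_innerₗ] using! VectorFourier.integral_fourierIntegral_smul_eq_flip
        (L := innerₗ E) Real.continuous_fourierChar continuous_inner φ.integrable hf

lemma fourierInv_toLp_ae_eq (hf : Integrable f) (hf2 : MemLp f 2) :
    (𝓕⁻ (hf2.toLp f) : Lp F 2 (volume : Measure E)) =ᵐ[volume] 𝓕⁻ f := by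
  have hinner : Continuous fun p : E × E ↦ (-innerₗ E) p.1 p.2 := continuous_inner.neg
  have hflip : (-innerₗ E).flip = -innerₗ E := by ext x y; simp [real_inner_comm]
  have hcont : Continuous (𝓕⁻ f) := VectorFourier.fourierIntegral_continuous
    Real.continuous_fourierChar hinner hf
  refine ae_eq_of_integral_schwartz_smul_eq ((Lp.memLp _).locallyIntegrable one_le_two)
    hcont.locallyIntegrable fun φ ↦ ?_
  have hdual := DFunLike.congr_fun (Lp.fourierInv_toTemperedDistribution_eq (hf2.toLp f)) φ
  simp only [TemperedDistribution.fourierInv_apply, Lp.toTemperedDistribution_apply] at hdual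
  calc ∫ x, φ x • (𝓕⁻ (hf2.toLp f) : Lp F 2 (volume : Measure E)) x
      = ∫ x, 𝓕⁻ φ x • hf2.toLp f x := hdual.symm
    _ = ∫ x, 𝓕⁻ φ x • f x := integral_congr_ae (hf2.coeFn_toLp.mono fun x hx ↦ by simp only [hx])
    _ = ∫ x, φ x • 𝓕⁻ f x := by
      rw [fourierInv_coe]
      simpa only [hflip] using! VectorFourier.integral_fourierIntegral_smul_eq_flip
        Real.continuous_fourierChar hinner φ.integrable hf

lemma memLp_two_fourierInv (hf : Integrable f) (hf2 : MemLp f 2) : MemLp (𝓕⁻ f) 2 :=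
  (Lp.memLp _).ae_eq (fourierInv_toLp_ae_eq hf hf2)

lemma toLp_fourierInv (hf : Integrable f) (hf2 : MemLp f 2) :
    (memLp_two_fourierInv hf hf2).toLp (𝓕⁻ f) = 𝓕⁻ (hf2.toLp f) :=
  Lp.ext <| (MemLp.coeFn_toLp _).trans (fourierInv_toLp_ae_eq hf hf2).symm

lemma integral_inner_fourierInv_eq (hf : Integrable f) (hf2 : MemLp f 2)
    (g : Lp F 2 (volume : Measure E)) :
    ∫ x, inner ℂ (𝓕⁻ f x) (g x) =
      ∫ x, inner ℂ (f x) ((𝓕 g : Lp F 2 (volume : Measure E)) x) := by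
  have hparseval : inner ℂ (𝓕⁻ (hf2.toLp f)) g = inner ℂ (hf2.toLp f) (𝓕 g) := by
    rw [← Lp.inner_fourier_eq, fourier_fourierInv_eq]
  rw [L2.inner_def, L2.inner_def] at hparseval
  calc ∫ x, inner ℂ (𝓕⁻ f x) (g x)
      = ∫ x, inner ℂ ((𝓕⁻ (hf2.toLp f) : Lp F 2 (volume : Measure E)) x) (g x) :=
        integral_congr_ae <| (fourierInv_toLp_ae_eq hf hf2).mono fun x hx ↦ by simp only [hx]
    _ = ∫ x, inner ℂ (hf2.toLp f x) ((𝓕 g : Lp F 2 (volume : Measure E)) x) := hparseval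
    _ = ∫ x, inner ℂ (f x) ((𝓕 g : Lp F 2 (volume : Measure E)) x) :=
        integral_congr_ae <| hf2.coeFn_toLp.mono fun x hx ↦ by simp only [hx]

end FourierLp

section HasSumL2

open FourierTransform

lemma toLp_finsetSum {α ι V : Type*} [MeasurableSpace α] {μ : Measure α} [NormedAddCommGroup V]
    {p : ℝ≥0∞} {F : ι → α → V} (hF : ∀ i, MemLp (F i) p μ) (s : Finset ι) :
    (memLp_finsetSum s fun i _ ↦ hF i).toLp (fun x ↦ ∑ i ∈ s, F i x) =
      ∑ i ∈ s, (hF i).toLp (F i) := by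
  refine Lp.ext ((MemLp.coeFn_toLp _).trans ?_)
  have hterms : ∀ᵐ x ∂μ, ∀ i ∈ s, (hF i).toLp (F i) x = F i x :=
    (Finset.eventually_all s).2 fun i _ ↦ (hF i).coeFn_toLp
  filter_upwards [Lp.coeFn_finsetSum s fun i ↦ (hF i).toLp (F i), hterms] with x hsum hx
  rw [hsum, Finset.sum_apply, Finset.sum_congr rfl hx]

lemma hasSum_toLp_iff_tendsto_eLpNorm {α ι V : Type*} [MeasurableSpace α] {μ : Measure α}
    [NormedAddCommGroup V] {p : ℝ≥0∞} [Fact (1 ≤ p)] {F : ι → α → V} {g : α → V}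
    (hF : ∀ i, MemLp (F i) p μ) (hg : MemLp g p μ) :
    HasSum (fun i ↦ (hF i).toLp (F i)) (hg.toLp g) ↔
      Tendsto (fun s ↦ eLpNorm (fun x ↦ g x - ∑ i ∈ s, F i x) p μ) atTop (𝓝 0) := by
  simp only [HasSum, SummationFilter.unconditional_filter, ← toLp_finsetSum]
  rw [Lp.tendsto_Lp_iff_tendsto_eLpNorm'']
  simp only [eLpNorm_sub_comm _ g]
  rfl

variable {d : ℕ}

local notation "ℝᵈ" => EuclideanSpace ℝ (Fin d)

lemma hasSumL2_ofReal {F : (Fin d → ℤ) → ℝᵈ → ℝ} {g : ℝᵈ → ℝ} :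
    HasSumL2 d (fun n x ↦ (F n x : ℂ)) (fun x ↦ (g x : ℂ)) ↔ HasSumL2 d F g := by
  refine tendsto_congr fun s ↦ eLpNorm_congr_norm_ae (ae_of_all _ fun x ↦ ?_)
  rw [← Complex.ofReal_sum, ← Complex.ofReal_sub, Complex.norm_real]

lemma HasSumL2.ae_eq_zero {V : Type} [NormedAddCommGroup V] {F : (Fin d → ℤ) → ℝᵈ → V} {g : ℝᵈ → V}
    {s : Set ℝᵈ} (h : HasSumL2 d F g) (hg : AEStronglyMeasurable g) (hs : MeasurableSet s)
    (hF : ∀ n, ∀ x ∈ s, F n x = 0) : ∀ᵐ x, x ∈ s → g x = 0 := by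
  have hle (t : Finset (Fin d → ℤ)) :
      eLpNorm (s.indicator g) 2 ≤ eLpNorm (fun x ↦ g x - ∑ n ∈ t, F n x) 2 := by
    refine eLpNorm_mono fun x ↦ ?_
    by_cases hx : x ∈ s
    · simp [hx, hF]
    · simp [hx]
  have hzero : eLpNorm (s.indicator g) 2 = 0 := le_bot_iff.1 (ge_of_tendsto' h hle)
  rw [eLpNorm_eq_zero_iff (hg.indicator hs) two_ne_zero] at hzero
  filter_upwards [hzero] with x hx hxs
  simpa [hxs] using hx

lemma hasSumL2_fourierInv_iff {F : (Fin d → ℤ) → ℝᵈ → ℂ} {g : ℝᵈ → ℂ}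
    (hF : ∀ n, Integrable (F n)) (hF2 : ∀ n, MemLp (F n) 2)
    (hg : Integrable g) (hg2 : MemLp g 2) :
    HasSumL2 d (fun n ↦ 𝓕⁻ (F n)) (𝓕⁻ g) ↔ HasSumL2 d F g := by
  unfold HasSumL2
  rw [← hasSum_toLp_iff_tendsto_eLpNorm hF2 hg2, ← hasSum_toLp_iff_tendsto_eLpNorm
    (fun n ↦ memLp_two_fourierInv (hF n) (hF2 n)) (memLp_two_fourierInv hg hg2)]
  simp only [toLp_fourierInv (hF _) (hF2 _), toLp_fourierInv hg hg2]
  exact (Lp.fourierTransformₗᵢ ℝᵈ ℂ).symm.toContinuousLinearEquiv.hasSum'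

end HasSumL2

section Cube

lemma Qcube_eq_preimage (d : ℕ) (r : ℝ) :
    Qcube d r = WithLp.ofLp ⁻¹' Set.Icc (fun _ ↦ -r) (fun _ ↦ r) := by
  ext v
  simp [Qcube, abs_le, Pi.le_def, forall_and]

lemma measurableSet_Qcube (d : ℕ) (r : ℝ) : MeasurableSet (Qcube d r) := by
  rw [Qcube_eq_preimage]
  exact (PiLp.volume_preserving_ofLp (Fin d)).measurable measurableSet_Icc

lemma volume_Qcube_lt_top (d : ℕ) (r : ℝ) : volume (Qcube d r) < ∞ := by
  rw [Qcube_eq_preimage, (PiLp.volume_preserving_ofLp (Fin d)).measure_preimage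
    measurableSet_Icc.nullMeasurableSet]
  exact isCompact_Icc.measure_lt_top

lemma preimage_pi_Ioc_ae_eq_Qcube (d : ℕ) (r : ℝ) :
    WithLp.ofLp ⁻¹' {x : Fin d → ℝ | ∀ i, x i ∈ Set.Ioc (-r) r} =ᵐ[volume] Qcube d r := by
  rw [Qcube_eq_preimage]
  refine (PiLp.volume_preserving_ofLp (Fin d)).quasiMeasurePreserving.preimage_ae_eq ?_
  simpa only [Set.pi, Set.mem_univ, forall_const] using!
    Measure.univ_pi_Ioc_ae_eq_Icc (μ := fun _ : Fin d ↦ volume) (f := fun _ ↦ -r) (g := fun _ ↦ r)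

lemma smul_mem_Qcube_iff {d : ℕ} {c r : ℝ} (hc : c ≠ 0) {v : EuclideanSpace ℝ (Fin d)} :
    c • v ∈ Qcube d r ↔ v ∈ Qcube d (r / |c|) := by
  refine forall_congr' fun j ↦ ?_
  rw [PiLp.smul_apply, smul_eq_mul, abs_mul, le_div_iff₀' (abs_pos.2 hc)]

/-- The uniform probability measure on the cube `Q_{N/2}(0)` of side length `N`. -/
def cubeMeasure (d : ℕ) (N : ℝ) : Measure (EuclideanSpace ℝ (Fin d)) :=
  ENNReal.ofReal (N ^ d)⁻¹ • volume.restrict (Qcube d (N / 2))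

variable {d : ℕ} {N : ℝ} {V : Type*} [NormedAddCommGroup V]

local notation "ℝᵈ" => EuclideanSpace ℝ (Fin d)

lemma cubeMeasure_absolutelyContinuous : cubeMeasure d N ≪ volume :=
  Measure.smul_absolutelyContinuous.trans Measure.restrict_le_self.absolutelyContinuous

lemma ae_cubeMeasure_mem_Qcube : ∀ᵐ v ∂cubeMeasure d N, v ∈ Qcube d (N / 2) :=
  Measure.ae_smul_measure (ae_restrict_mem (measurableSet_Qcube d _)) _

lemma eLpNorm_eq_mul_eLpNorm_cubeMeasure (hN : 0 < N) {p : ℝ≥0∞} (hp : p ≠ ∞) {f : ℝᵈ → V}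
    (hf : ∀ᵐ v, v ∉ Qcube d (N / 2) → f v = 0) :
    eLpNorm f p = ENNReal.ofReal (N ^ d) ^ (1 / p).toReal * eLpNorm f p (cubeMeasure d N) := by
  have hrestrict :
      volume.restrict (Qcube d (N / 2)) = ENNReal.ofReal (N ^ d) • cubeMeasure d N := by
    rw [cubeMeasure, smul_smul, ← ENNReal.ofReal_mul (by positivity),
      mul_inv_cancel₀ (by positivity), ENNReal.ofReal_one, one_smul]
  have hind : f =ᵐ[volume] (Qcube d (N / 2)).indicator f := by
    filter_upwards [hf] with v hv
    by_cases hvQ : v ∈ Qcube d (N / 2) <;> simp [hvQ, hv]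
  rw [eLpNorm_congr_ae hind, eLpNorm_indicator_eq_eLpNorm_restrict (measurableSet_Qcube d _),
    hrestrict, eLpNorm_smul_measure_of_ne_top hp, smul_eq_mul]

lemma integral_cubeMeasure [NormedSpace ℝ V] (hN : 0 < N) {f : ℝᵈ → V}
    (hf : ∀ᵐ v, v ∉ Qcube d (N / 2) → f v = 0) :
    ∫ v, f v ∂cubeMeasure d N = (N ^ d)⁻¹ • ∫ v, f v := by
  rw [cubeMeasure, integral_smul_measure, ENNReal.toReal_ofReal (by positivity),
    setIntegral_eq_integral_of_ae_compl_eq_zero hf]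

end Cube

section FourierSeries

open FourierTransform RealInnerProductSpace UnitAddTorus

/-- The Haar probability measure as the volume of the circle `ℝ / ℤ`. This is the convention under
which Mathlib states the theory of `UnitAddTorus.mFourier`, where it is a local instance. -/
@[reducible] def unitAddCircleMeasureSpace : MeasureSpace UnitAddCircle := ⟨AddCircle.haarAddCircle⟩

attribute [local instance] unitAddCircleMeasureSpace

local instance isProbabilityMeasure_volume_unitAddCircle :
    IsProbabilityMeasure (volume : Measure UnitAddCircle) :=
  inferInstanceAs (IsProbabilityMeasure AddCircle.haarAddCircle)

lemma tendsto_eLpNorm_mFourier_series {ι : Type*} [Fintype ι] {f : UnitAddTorus ι → ℂ}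
    (hf : MemLp f 2) :
    Tendsto (fun s ↦ eLpNorm (fun t ↦ f t - ∑ n ∈ s, mFourierCoeff f n * mFourier n t) 2)
      atTop (𝓝 0) := by
  have hmem (n : ι → ℤ) : MemLp (fun t ↦ mFourierCoeff f n * mFourier n t) 2 :=
    ((mFourier n).memLp volume ℂ).const_mul _
  rw [← hasSum_toLp_iff_tendsto_eLpNorm hmem hf]
  convert! hasSum_mFourier_series_L2 (hf.toLp f) using 2 with n
  have hcoeff : mFourierCoeff (hf.toLp f) n = mFourierCoeff f n :=
    integral_congr_ae (hf.coeFn_toLp.mono fun t ht ↦ by simp only [ht])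
  rw [hcoeff]
  rfl

/-- The parametrization `t ↦ -N t` of the cube `Q_{N/2}(0)` by the torus, through representatives
`t ∈ (-1/2, 1/2]^d`. The sign turns the monomials `mFourier n` into the characters
`v ↦ exp (-2πi ⟪v, n / N⟫)`, whose inverse Fourier transforms are centred at `n / N`. -/
def cubeParam (d : ℕ) (N : ℝ) (t : UnitAddTorus (Fin d)) : EuclideanSpace ℝ (Fin d) :=
  -N • WithLp.toLp 2 (measurableEquivPiIoc (fun _ ↦ -(1 / 2)) t).1

variable {d : ℕ} {N : ℝ}

local notation "ℝᵈ" => EuclideanSpace ℝ (Fin d)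

lemma measurePreserving_cubeParam (hN : 0 < N) :
    MeasurePreserving (cubeParam d N) volume (cubeMeasure d N) := by
  have hupper : (-(1 / 2) + 1 : ℝ) = 1 / 2 := by norm_num
  have hS : MeasurableSet {x : Fin d → ℝ | ∀ i, x i ∈ Set.Ioc (-(1 / 2)) (-(1 / 2) + 1)} :=
    .univ_pi' fun _ ↦ measurableSet_Ioc
  have hunit : MeasurePreserving
      (fun t ↦ (WithLp.toLp 2 (measurableEquivPiIoc (fun _ ↦ -(1 / 2)) t).1 : ℝᵈ)) volume
      (volume.restrict (Qcube d (1 / 2))) := by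
    have hcube := preimage_pi_Ioc_ae_eq_Qcube d (1 / 2)
    nth_rewrite 2 [← hupper] at hcube
    have hrestrict := (PiLp.volume_preserving_toLp (Fin d)).restrict_preimage
      ((PiLp.volume_preserving_ofLp (Fin d)).measurable hS)
    rw [← Measure.restrict_congr_set hcube]
    exact hrestrict.comp ((measurePreserving_subtype_coe hS).comp (measurePreserving_equivPiIoc _))
  have hdilate : (fun v : ℝᵈ ↦ -N • v) ⁻¹' Qcube d (N / 2) = Qcube d (1 / 2) := by
    ext v
    rw [Set.mem_preimage, smul_mem_Qcube_iff (neg_ne_zero.2 hN.ne'), abs_neg, abs_of_pos hN,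
      div_right_comm, div_self hN.ne']
  refine MeasurePreserving.comp ⟨measurable_const_smul (-N), ?_⟩ hunit
  rw [← hdilate, ← Measure.restrict_map (measurable_const_smul (-N)) (measurableSet_Qcube d _),
    Measure.map_addHaar_smul volume (neg_ne_zero.2 hN.ne'), Measure.restrict_smul, cubeMeasure,
    finrank_euclideanSpace_fin, abs_inv, abs_pow, abs_neg, abs_of_pos hN]

lemma mFourier_eq_cubeParam (hN : N ≠ 0) (n : Fin d → ℤ) (t : UnitAddTorus (Fin d)) :
    mFourier n t = 𝐞 (-⟪cubeParam d N t, latticePt d N n⟫) := by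
  set y : Fin d → ℝ := (measurableEquivPiIoc (fun _ ↦ -(1 / 2)) t).1 with hy
  have hcoe (j : Fin d) : t j = (y j : UnitAddCircle) :=
    congrFun ((measurableEquivPiIoc fun _ ↦ -(1 / 2)).symm_apply_apply t).symm j
  have hinner : -⟪cubeParam d N t, latticePt d N n⟫ = ∑ j, n j * y j := by
    rw [cubeParam, ← hy, real_inner_smul_left, neg_mul, neg_neg, PiLp.inner_apply, Finset.mul_sum]
    refine Finset.sum_congr rfl fun j _ ↦ ?_
    simp [latticePt, field]
  change ∏ j, fourier (n j) (t j) = _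
  rw [hinner, Real.fourierChar_apply, Finset.mul_sum, Complex.ofReal_sum, Finset.sum_mul,
    Complex.exp_sum]
  refine Finset.prod_congr rfl fun j _ ↦ ?_
  rw [hcoe, fourier_coe_apply]
  push_cast
  ring_nf

/-- The Fourier transform of `f_{N,n}`: a character of the cube `Q_{N/2}(0)`, extended by zero and
normalised by the volume of the cube. -/
def samplingKernel (d : ℕ) (N : ℝ) (n : Fin d → ℤ) : EuclideanSpace ℝ (Fin d) → ℂ :=
  (Qcube d (N / 2)).indicator fun v ↦ ((N : ℂ) ^ d)⁻¹ * 𝐞 (-⟪v, latticePt d N n⟫)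

lemma memLp_samplingKernel (n : Fin d → ℤ) (p : ℝ≥0∞) : MemLp (samplingKernel d N n) p := by
  have : IsFiniteMeasure (volume.restrict (Qcube d (N / 2))) :=
    isFiniteMeasure_restrict.2 (volume_Qcube_lt_top d _).ne
  rw [samplingKernel, memLp_indicator_iff_restrict (measurableSet_Qcube d _)]
  refine .of_bound (Continuous.aestronglyMeasurable (by fun_prop)) ‖((N : ℂ) ^ d)⁻¹‖
    (ae_of_all _ fun v ↦ ?_)
  rw [norm_mul, Circle.norm_coe, mul_one]

lemma samplingKernel_of_notMem (n : Fin d → ℤ) {v : ℝᵈ} (hv : v ∉ Qcube d (N / 2)) :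
    samplingKernel d N n v = 0 :=
  Set.indicator_of_notMem hv _

lemma latticePt_neg (n : Fin d → ℤ) : latticePt d N (-n) = -latticePt d N n := by
  ext j
  simp [latticePt, neg_div]

variable {g : EuclideanSpace ℝ (Fin d) → ℂ}

lemma mFourierCoeff_comp_cubeParam (hN : 0 < N) (hg : AEStronglyMeasurable g)
    (hsupp : ∀ᵐ v, v ∉ Qcube d (N / 2) → g v = 0) (n : Fin d → ℤ) :
    mFourierCoeff (g ∘ cubeParam d N) n = 𝓕⁻ g (latticePt d N n) * ((N : ℂ) ^ d)⁻¹ := by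
  have hmeas : AEStronglyMeasurable (fun v ↦ 𝐞 ⟪v, latticePt d N n⟫ • g v)
      (Measure.map (cubeParam d N) volume) := by
    rw [(measurePreserving_cubeParam hN).map_eq]
    refine AEStronglyMeasurable.mono_ac cubeMeasure_absolutelyContinuous ?_
    exact (Continuous.aestronglyMeasurable (by fun_prop)).smul hg
  calc mFourierCoeff (g ∘ cubeParam d N) n
      = ∫ t, 𝐞 ⟪cubeParam d N t, latticePt d N n⟫ • g (cubeParam d N t) := by
        simp only [mFourierCoeff, mFourier_eq_cubeParam hN.ne', latticePt_neg, inner_neg_right,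
          neg_neg]
        rfl
    _ = ∫ v, 𝐞 ⟪v, latticePt d N n⟫ • g v ∂cubeMeasure d N := by
        rw [← (measurePreserving_cubeParam hN).map_eq, integral_map
          (measurePreserving_cubeParam hN).aemeasurable hmeas]
    _ = 𝓕⁻ g (latticePt d N n) * ((N : ℂ) ^ d)⁻¹ := by
        rw [integral_cubeMeasure hN (hsupp.mono fun v hv hvQ ↦ by rw [hv hvQ, smul_zero]),
          Real.fourierInv_eq, Complex.real_smul, mul_comm]
        push_cast
        rfl

theorem hasSumL2_fourierInv_mul_samplingKernel (hN : 0 < N) (hg : MemLp g 2)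
    (hsupp : ∀ᵐ v, v ∉ Qcube d (N / 2) → g v = 0) :
    HasSumL2 d (fun n v ↦ 𝓕⁻ g (latticePt d N n) * samplingKernel d N n v) g := by
  let R (s : Finset (Fin d → ℤ)) (v : ℝᵈ) : ℂ :=
    g v - ∑ n ∈ s, 𝓕⁻ g (latticePt d N n) * samplingKernel d N n v
  have hR (s : Finset (Fin d → ℤ)) : AEStronglyMeasurable (R s) :=
    hg.1.sub <| Finset.aestronglyMeasurable_fun_sum s fun n _ ↦
      (memLp_samplingKernel n 2).1.const_mul _
  have hRsupp (s : Finset (Fin d → ℤ)) : ∀ᵐ v, v ∉ Qcube d (N / 2) → R s v = 0 :=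
    hsupp.mono fun v hv hvQ ↦ by simp [R, hv hvQ, samplingKernel_of_notMem _ hvQ]
  have hΦ := measurePreserving_cubeParam (d := d) hN
  have hmem : MemLp (g ∘ cubeParam d N) 2 :=
    ((hg.restrict _).smul_measure ENNReal.ofReal_ne_top).comp_measurePreserving hΦ
  have hcube (s : Finset (Fin d → ℤ)) : eLpNorm (R s) 2 (cubeMeasure d N) =
      eLpNorm (fun t ↦ (g ∘ cubeParam d N) t -
        ∑ n ∈ s, mFourierCoeff (g ∘ cubeParam d N) n * mFourier n t) 2 := by
    rw [← eLpNorm_comp_measurePreserving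
      ((hR s).mono_ac cubeMeasure_absolutelyContinuous) hΦ]
    refine eLpNorm_congr_ae ?_
    filter_upwards [hΦ.quasiMeasurePreserving.ae ae_cubeMeasure_mem_Qcube] with t ht
    simp only [R, Function.comp_apply, samplingKernel, Set.indicator_of_mem ht,
      mFourierCoeff_comp_cubeParam hN hg.1 hsupp, mFourier_eq_cubeParam hN.ne', mul_assoc]
  have hlim := ENNReal.Tendsto.const_mul (a := ENNReal.ofReal (N ^ d) ^ (1 / 2 : ℝ≥0∞).toReal)
    (tendsto_eLpNorm_mFourier_series hmem) (.inr (by finiteness))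
  rw [mul_zero] at hlim
  refine hlim.congr fun s ↦ ?_
  rw [← hcube, ← eLpNorm_eq_mul_eLpNorm_cubeMeasure hN ENNReal.ofNat_ne_top (hRsupp s)]

end FourierSeries

section Sinc

open FourierTransform RealInnerProductSpace

lemma integral_fourierChar_mul_eq_sinc (r y : ℝ) :
    ∫ t in -r..r, (𝐞 (t * y) : ℂ) = 2 * r * Real.sinc (2 * Real.pi * r * y) := by
  rcases eq_or_ne y 0 with rfl | hy
  · simp [two_mul]
  have hc : 2 * Real.pi * y ≠ 0 := mul_ne_zero Real.two_pi_pos.ne' hy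
  have hy' : (y : ℂ) ≠ 0 := by exact_mod_cast hy
  calc ∫ t in -r..r, (𝐞 (t * y) : ℂ)
      = ∫ t in -r..r, Complex.exp (((2 * Real.pi * y * t : ℝ) : ℂ) * Complex.I) := by
        simp only [Real.fourierChar_apply, mul_assoc, mul_comm y]
    _ = (2 * Real.pi * y : ℂ)⁻¹ *
          (2 * (2 * Real.pi * y * r) * Real.sinc (2 * Real.pi * y * r)) := by
        rw [intervalIntegral.integral_comp_mul_left (fun t : ℝ ↦ Complex.exp (t * Complex.I)) hc,
          mul_neg, integral_exp_mul_I_eq_sinc, Complex.real_smul]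
        push_cast
        rfl
    _ = 2 * r * Real.sinc (2 * Real.pi * r * y) := by
        rw [mul_right_comm (2 * Real.pi) y r]
        field_simp

variable {d : ℕ} {N : ℝ}

local notation "ℝᵈ" => EuclideanSpace ℝ (Fin d)

lemma integral_Qcube_fourierChar {r : ℝ} (hr : 0 ≤ r) (x : ℝᵈ) :
    ∫ v in Qcube d r, (𝐞 ⟪v, x⟫ : ℂ) = ∏ j, (2 * r * Real.sinc (2 * Real.pi * r * x j) : ℂ) := by
  have hprod (v : ℝᵈ) : (𝐞 ⟪v, x⟫ : ℂ) = ∏ j, (𝐞 (v j * x j) : ℂ) := by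
    simp only [Real.fourierChar_apply, ← Complex.exp_sum, ← Finset.sum_mul, ← Complex.ofReal_sum,
      ← Finset.mul_sum, PiLp.inner_apply]
    simp only [RCLike.inner_apply, conj_trivial, mul_comm]
  calc ∫ v in Qcube d r, (𝐞 ⟪v, x⟫ : ℂ)
      = ∫ y in Set.univ.pi fun _ ↦ Set.Icc (-r) r, ∏ j, (𝐞 (y j * x j) : ℂ) := by
        simp only [hprod]
        rw [Qcube_eq_preimage, Set.pi_univ_Icc]
        exact (PiLp.volume_preserving_ofLp (Fin d)).setIntegral_preimage_emb
          (MeasurableEquiv.toLp 2 _).symm.measurableEmbedding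
          (fun y ↦ ∏ j, (𝐞 (y j * x j) : ℂ)) _
    _ = ∏ j, ∫ t in Set.Icc (-r) r, (𝐞 (t * x j) : ℂ) := by
        rw [volume_pi, Measure.restrict_pi_pi,
          integral_fintype_prod_eq_prod fun j t ↦ (𝐞 (t * x j) : ℂ)]
    _ = ∏ j, (2 * r * Real.sinc (2 * Real.pi * r * x j) : ℂ) := by
        refine Finset.prod_congr rfl fun j _ ↦ ?_
        rw [integral_Icc_eq_integral_Ioc, ← intervalIntegral.integral_of_le (by linarith),
          integral_fourierChar_mul_eq_sinc]

theorem fourierInv_samplingKernel (hN : 0 < N) (n : Fin d → ℤ) (x : ℝᵈ) :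
    𝓕⁻ (samplingKernel d N n) x = fN d N n x := by
  have hindicator : (fun v ↦ 𝐞 ⟪v, x⟫ • samplingKernel d N n v) =
      (Qcube d (N / 2)).indicator fun v ↦ ((N : ℂ) ^ d)⁻¹ * 𝐞 ⟪v, x - latticePt d N n⟫ := by
    ext v
    by_cases hv : v ∈ Qcube d (N / 2)
    · simp only [samplingKernel, Set.indicator_of_mem hv, Circle.smul_def, smul_eq_mul]
      rw [inner_sub_right, sub_eq_add_neg, AddChar.map_add_eq_mul, Circle.coe_mul, mul_left_comm]
    · simp only [samplingKernel, Set.indicator_of_notMem hv, smul_zero]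
  have harg (j : Fin d) :
      2 * Real.pi * (N / 2) * (x - latticePt d N n) j = Real.pi * (N * x j - n j) := by
    simp only [latticePt, PiLp.sub_apply]
    field_simp
  have hside : (2 * (N / 2 : ℝ) : ℂ) = N := by
    push_cast
    ring
  rw [Real.fourierInv_eq, hindicator, integral_indicator (measurableSet_Qcube d _),
    integral_const_mul, integral_Qcube_fourierChar (by positivity), hside,
    Finset.prod_mul_distrib, Finset.prod_const, Finset.card_fin,
    inv_mul_cancel_left₀ (pow_ne_zero d (by exact_mod_cast hN.ne')), fN, Complex.ofReal_prod]
  simp only [harg]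
  rfl

end Sinc

section Sampling

open FourierTransform

lemma fourierInv_const_mul {E : Type*} [NormedAddCommGroup E] [InnerProductSpace ℝ E]
    [FiniteDimensional ℝ E] [MeasurableSpace E] [BorelSpace E] (c : ℂ) (f : E → ℂ) :
    𝓕⁻ (fun v ↦ c * f v) = fun x ↦ c * 𝓕⁻ f x := by
  ext x
  simp only [Real.fourierInv_eq, ← integral_const_mul, mul_smul_comm]

variable {d : ℕ} {N : ℝ}

local notation "ℝᵈ" => EuclideanSpace ℝ (Fin d)

theorem hasSumL2_sampling_iff (hN : 0 < N) {g : ℝᵈ → ℂ} (hg : Integrable g) (hg2 : MemLp g 2) :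
    HasSumL2 d (fun n x ↦ 𝓕⁻ g (latticePt d N n) * fN d N n x) (𝓕⁻ g) ↔
      ∀ᵐ v, v ∉ Qcube d (N / 2) → g v = 0 := by
  have hinv : (fun n x ↦ 𝓕⁻ g (latticePt d N n) * (fN d N n x : ℂ)) =
      fun n ↦ 𝓕⁻ (fun v ↦ 𝓕⁻ g (latticePt d N n) * samplingKernel d N n v) := by
    simp only [fourierInv_const_mul, fourierInv_samplingKernel hN]
  have hkernel (n : Fin d → ℤ) (p : ℝ≥0∞) :
      MemLp (fun v ↦ 𝓕⁻ g (latticePt d N n) * samplingKernel d N n v) p :=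
    (memLp_samplingKernel n p).const_mul _
  rw [hinv, hasSumL2_fourierInv_iff (fun n ↦ memLp_one_iff_integrable.1 (hkernel n 1))
    (fun n ↦ hkernel n 2) hg hg2]
  refine ⟨fun h ↦ h.ae_eq_zero hg.1 (measurableSet_Qcube d _).compl fun n v hv ↦ ?_,
    hasSumL2_fourierInv_mul_samplingKernel hN hg2⟩
  rw [samplingKernel_of_notMem n hv, mul_zero]

end Sampling

section Heat

open FourierTransform RealInnerProductSpace

variable {E : Type*} [NormedAddCommGroup E]

/-- The Fourier multiplier `v ↦ exp (-4π²T|v|²)` of the heat semigroup at time `T`, for the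
normalisation of the Fourier transform with kernel `exp (-2πi ⟪x, v⟫)`. -/
def heatMultiplier (T : ℝ) (v : E) : ℂ :=
  Complex.exp (-(4 * Real.pi ^ 2 * T : ℝ) * ‖v‖ ^ 2)

lemma heatMultiplier_ne_zero (T : ℝ) (v : E) : heatMultiplier T v ≠ 0 :=
  Complex.exp_ne_zero _

lemma continuous_heatMultiplier (T : ℝ) : Continuous (heatMultiplier T : E → ℂ) := by
  unfold heatMultiplier
  fun_prop

variable {T : ℝ}

lemma heatMultiplier_eq_ofReal (v : E) :
    heatMultiplier T v = (Real.exp (-(4 * Real.pi ^ 2 * T) * ‖v‖ ^ 2) : ℝ) := by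
  rw [heatMultiplier]
  push_cast
  rfl

lemma norm_heatMultiplier_le_one (hT : 0 ≤ T) (v : E) : ‖heatMultiplier T v‖ ≤ 1 := by
  rw [heatMultiplier_eq_ofReal, Complex.norm_real, Real.norm_of_nonneg (Real.exp_pos _).le,
    Real.exp_le_one_iff, neg_mul, neg_nonpos]
  positivity

variable [InnerProductSpace ℝ E] [FiniteDimensional ℝ E] [MeasurableSpace E] [BorelSpace E]

lemma integrable_heatMultiplier (hT : 0 < T) : Integrable (heatMultiplier T : E → ℂ) := by
  have hb : 0 < ((4 * Real.pi ^ 2 * T : ℝ) : ℂ).re := Complex.ofReal_re _ ▸ by positivity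
  simpa only [zero_mul, add_zero] using!
    GaussianFourier.integrable_cexp_neg_mul_sq_norm_add hb 0 (0 : E)

lemma memLp_heatMultiplier (hT : 0 < T) : MemLp (heatMultiplier T : E → ℂ) 2 := by
  have hmeas := (continuous_heatMultiplier (E := E) T).aestronglyMeasurable (μ := volume)
  rw [memLp_two_iff_integrable_sq_norm hmeas]
  refine (integrable_heatMultiplier hT).mono (hmeas.norm.pow 2) (ae_of_all _ fun v ↦ ?_)
  rw [norm_pow, norm_norm]
  exact pow_le_of_le_one (norm_nonneg _) (norm_heatMultiplier_le_one hT.le v) two_ne_zero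

lemma memLp_heatMultiplier_mul (hT : 0 ≤ T) {p : ℝ≥0∞} {f : E → ℂ} (hf : MemLp f p) :
    MemLp (fun v ↦ heatMultiplier T v * f v) p :=
  hf.of_le ((continuous_heatMultiplier T).aestronglyMeasurable.mul hf.1) <| ae_of_all _ fun v ↦ by
    rw [norm_mul]
    exact mul_le_of_le_one_left (norm_nonneg _) (norm_heatMultiplier_le_one hT v)

lemma integrable_heatMultiplier_mul (hT : 0 < T) {f : E → ℂ} (hf : MemLp f 2) :
    Integrable (fun v ↦ heatMultiplier T v * f v) :=
  (memLp_heatMultiplier hT).integrable_mul hf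

lemma fourierInv_heatMultiplier (hT : 0 < T) (x : E) :
    𝓕⁻ (heatMultiplier T : E → ℂ) x =
      ((4 * Real.pi * T) ^ (-(Module.finrank ℝ E : ℝ) / 2) *
        Real.exp (-‖x‖ ^ 2 / (4 * T)) : ℝ) := by
  have hb : 0 < ((4 * Real.pi ^ 2 * T : ℝ) : ℂ).re := Complex.ofReal_re _ ▸ by positivity
  have hpi : (Real.pi : ℂ) ≠ 0 := by exact_mod_cast Real.pi_ne_zero
  have hT' : (T : ℂ) ≠ 0 := by exact_mod_cast hT.ne'
  have hbase : (Real.pi : ℂ) / (4 * Real.pi ^ 2 * T : ℝ) = ((4 * Real.pi * T)⁻¹ : ℝ) := by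
    push_cast
    field_simp
  have hexp : -(Real.pi : ℂ) ^ 2 * ‖-x‖ ^ 2 / (4 * Real.pi ^ 2 * T : ℝ) =
      (-‖x‖ ^ 2 / (4 * T) : ℝ) := by
    rw [norm_neg]
    push_cast
    field_simp
  rw [Real.fourierInv_eq_fourier_neg]
  refine (fourier_gaussian_innerProductSpace hb (-x)).trans ?_
  rw [hbase, hexp, neg_div _ (Module.finrank ℝ E : ℝ), Real.rpow_neg (by positivity),
    ← Real.inv_rpow (by positivity), Complex.ofReal_mul, Complex.ofReal_exp,
    Complex.ofReal_cpow (by positivity)]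
  norm_num

lemma fourierInv_fourierChar_mul (f : E → ℂ) (w x : E) :
    𝓕⁻ (fun v ↦ 𝐞 (-⟪v, w⟫) * f v) x = 𝓕⁻ f (x - w) := by
  rw [Real.fourierInv_eq, Real.fourierInv_eq]
  congr 1 with v
  rw [inner_sub_right, sub_eq_add_neg, AddChar.map_add_eq_mul, mul_smul, Circle.smul_def (𝐞 (-_)),
    smul_eq_mul]

-- Parseval, with the heat kernel centred at `x` written as the inverse Fourier transform of the
-- modulated multiplier.
theorem ofReal_heatSol {d : ℕ} (hT : 0 < T) {u₀ : EuclideanSpace ℝ (Fin d) → ℝ}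
    (hu : MemLp (fun x ↦ (u₀ x : ℂ)) 2) (x : EuclideanSpace ℝ (Fin d)) :
    (heatSol d u₀ T x : ℂ) = 𝓕⁻ (fun v ↦ heatMultiplier T v *
      (𝓕 (hu.toLp _) : Lp ℂ 2 (volume : Measure (EuclideanSpace ℝ (Fin d)))) v) x := by
  set û : Lp ℂ 2 (volume : Measure (EuclideanSpace ℝ (Fin d))) := 𝓕 (hu.toLp _)
  let G (v : EuclideanSpace ℝ (Fin d)) : ℂ := 𝐞 (-⟪v, x⟫) * heatMultiplier T v
  have hnorm (v : EuclideanSpace ℝ (Fin d)) : ‖G v‖ = ‖heatMultiplier T v‖ := by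
    rw [norm_mul, Circle.norm_coe, one_mul]
  have hmeas : AEStronglyMeasurable G :=
    ((by fun_prop : Continuous fun v ↦ (𝐞 (-⟪v, x⟫) : ℂ)).mul
      (continuous_heatMultiplier T)).aestronglyMeasurable
  have hG : Integrable G :=
    (integrable_heatMultiplier hT).mono hmeas (ae_of_all _ fun v ↦ (hnorm v).le)
  have hG2 : MemLp G 2 :=
    (memLp_heatMultiplier hT).of_le hmeas (ae_of_all _ fun v ↦ (hnorm v).le)
  calc (heatSol d u₀ T x : ℂ)
      = ∫ y, inner ℂ (𝓕⁻ G y) (hu.toLp _ y) := by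
        rw [heatSol, ← integral_const_mul, ← integral_complex_ofReal]
        refine integral_congr_ae (hu.coeFn_toLp.mono fun y hy ↦ ?_)
        simp only [hy, RCLike.inner_apply, G, fourierInv_fourierChar_mul,
          fourierInv_heatMultiplier hT, Complex.conj_ofReal, finrank_euclideanSpace_fin,
          norm_sub_rev y x]
        push_cast
        ring
    _ = ∫ v, inner ℂ (G v) (û v) := integral_inner_fourierInv_eq hG hG2 _
    _ = 𝓕⁻ (fun v ↦ heatMultiplier T v * û v) x := by
        rw [Real.fourierInv_eq]
        congr 1 with v
        simp only [G, heatMultiplier_eq_ofReal, RCLike.inner_apply, map_mul, Complex.conj_ofReal,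
          AddChar.map_neg_eq_inv, Circle.coe_inv_eq_conj, Complex.conj_conj, Circle.smul_def,
          smul_eq_mul]
        ring

end Heat

section Plancherel

open FourierTransform RealInnerProductSpace

lemma tendsto_eLpNorm_indicator_closedBall_sub {X V : Type*} [PseudoMetricSpace X]
    [MeasurableSpace X] [OpensMeasurableSpace X] [NormedAddCommGroup V] {μ : Measure X}
    {p : ℝ≥0∞} (hp₀ : p ≠ 0) (hp : p ≠ ∞) {f : X → V} (hf : MemLp f p μ) (x₀ : X) :
    Tendsto (fun R ↦ eLpNorm ((closedBall x₀ R).indicator f - f) p μ) atTop (𝓝 0) := by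
  have hp_pos : 0 < p.toReal := ENNReal.toReal_pos hp₀ hp
  have hlintegral : Tendsto (fun R ↦ ∫⁻ x, ‖((closedBall x₀ R).indicator f - f) x‖ₑ ^ p.toReal ∂μ)
      atTop (𝓝 (∫⁻ _, 0 ∂μ)) := by
    refine tendsto_lintegral_filter_of_dominated_convergence' (fun x ↦ ‖f x‖ₑ ^ p.toReal)
      (.of_forall fun R ↦
        ((hf.1.indicator measurableSet_closedBall).sub hf.1).enorm.pow_const _)
      (.of_forall fun R ↦ .of_forall fun x ↦ ?_)
      (lintegral_rpow_enorm_lt_top_of_eLpNorm_lt_top hp₀ hp hf.2).ne (.of_forall fun x ↦ ?_)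
    · by_cases hx : x ∈ closedBall x₀ R <;> simp [hx, ENNReal.zero_rpow_of_pos hp_pos]
    · refine tendsto_const_nhds.congr' ?_
      filter_upwards [eventually_ge_atTop (dist x x₀)] with R hR
      simp [mem_closedBall.2 hR, ENNReal.zero_rpow_of_pos hp_pos]
  have hrpow := hlintegral.ennrpow_const (1 / p.toReal)
  rw [lintegral_zero, ENNReal.zero_rpow_of_pos (by positivity)] at hrpow
  simpa only [eLpNorm_eq_lintegral_rpow_enorm_toReal hp₀ hp] using hrpow

lemma integrable_indicator_closedBall {X V : Type*} [PseudoMetricSpace X] [ProperSpace X]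
    [MeasurableSpace X] [OpensMeasurableSpace X] [NormedAddCommGroup V] {μ : Measure X}
    [IsLocallyFiniteMeasure μ] {p : ℝ≥0∞} (hp : 1 ≤ p) {f : X → V} (hf : MemLp f p μ) (x₀ : X)
    (R : ℝ) : Integrable ((closedBall x₀ R).indicator f) μ :=
  (integrable_indicator_iff measurableSet_closedBall).2 <|
    (hf.locallyIntegrable hp).integrableOn_isCompact (isCompact_closedBall x₀ R)

lemma tendstoInMeasure_fourier_indicator_closedBall {E F : Type*} [NormedAddCommGroup E]
    [InnerProductSpace ℝ E] [FiniteDimensional ℝ E] [MeasurableSpace E] [BorelSpace E]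
    [NormedAddCommGroup F] [InnerProductSpace ℂ F] [CompleteSpace F] {f : E → F}
    (hf : MemLp f 2) :
    TendstoInMeasure volume (fun R : ℝ ↦ 𝓕 ((closedBall 0 R).indicator f)) atTop
      (𝓕 (hf.toLp f) : Lp F 2 (volume : Measure E)) := by
  have hball (R : ℝ) : MemLp ((closedBall 0 R).indicator f) 2 :=
    hf.indicator measurableSet_closedBall
  have hLp : Tendsto (fun R ↦ (hball R).toLp _) atTop (𝓝 (hf.toLp f)) :=
    (Lp.tendsto_Lp_iff_tendsto_eLpNorm'' _ hball f hf).2 <|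
      tendsto_eLpNorm_indicator_closedBall_sub two_ne_zero ENNReal.ofNat_ne_top hf 0
  have hfourier := ((Lp.fourierTransformₗᵢ E F).continuous.tendsto _).comp hLp
  exact (tendstoInMeasure_of_tendsto_Lp hfourier).congr_left
    fun R ↦ fourier_toLp_ae_eq (integrable_indicator_closedBall one_le_two hf 0 R) (hball R)

lemma ae_smul_iff {E : Type*} [NormedAddCommGroup E] [NormedSpace ℝ E] [MeasurableSpace E]
    [BorelSpace E] [FiniteDimensional ℝ E] {μ : Measure E} [μ.IsAddHaarMeasure] {r : ℝ}
    (hr : r ≠ 0) {P : E → Prop} : (∀ᵐ x ∂μ, P (r • x)) ↔ ∀ᵐ x ∂μ, P x := by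
  refine ⟨fun h ↦ ?_, (Measure.quasiMeasurePreserving_smul μ hr).ae⟩
  simpa [smul_smul, hr] using (Measure.quasiMeasurePreserving_smul μ (inv_ne_zero hr)).ae h

variable {d : ℕ}

local notation "ℝᵈ" => EuclideanSpace ℝ (Fin d)

lemma truncFT_eq (f : ℝᵈ → ℂ) (R : ℝ) (ξ : ℝᵈ) :
    truncFT d f R ξ = (((2 * Real.pi) ^ (-(d : ℝ) / 2) : ℝ) : ℂ) *
      𝓕 ((closedBall 0 R).indicator f) ((2 * Real.pi)⁻¹ • ξ) := by
  have hpi : (Real.pi : ℂ) ≠ 0 := mod_cast Real.pi_ne_zero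
  rw [truncFT, ← integral_indicator measurableSet_closedBall, Real.fourier_eq']
  congr 2 with x
  by_cases hx : x ∈ closedBall (0 : ℝᵈ) R
  · simp only [hx, Set.indicator_of_mem, smul_eq_mul, real_inner_smul_right]
    congr 2
    push_cast
    field_simp
  · simp [hx]

lemma continuous_truncFT {f : ℝᵈ → ℂ} (hf : MemLp f 2) (R : ℝ) : Continuous (truncFT d f R) := by
  have hcont : Continuous (𝓕 ((closedBall 0 R).indicator f)) :=
    VectorFourier.fourierIntegral_continuous Real.continuous_fourierChar continuous_inner
      (integrable_indicator_closedBall one_le_two hf 0 R)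
  exact (continuous_const.mul (hcont.comp (continuous_const_smul _))).congr
    fun ξ ↦ (truncFT_eq f R ξ).symm

lemma IsL2Fourier.tendstoInMeasure_truncFT {f fhat : ℝᵈ → ℂ} (h : IsL2Fourier d f fhat)
    (hf : MemLp f 2) : TendstoInMeasure volume (truncFT d f) atTop fhat :=
  tendstoInMeasure_of_tendsto_eLpNorm two_ne_zero
    (fun R ↦ (continuous_truncFT hf R).aestronglyMeasurable) h.1.1 <|
    h.2.congr fun R ↦ eLpNorm_sub_comm fhat (truncFT d f R) 2 volume

-- Both sides are limits of `truncFT d f R` along a common subsequence of radii; passing to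
-- pointwise limits avoids tracking how the dilation and the constant rescale the `L²` norms.
lemma IsL2Fourier.ae_eq {f fhat : ℝᵈ → ℂ} (h : IsL2Fourier d f fhat) (hf : MemLp f 2) :
    fhat =ᵐ[volume] fun ξ ↦ (((2 * Real.pi) ^ (-(d : ℝ) / 2) : ℝ) : ℂ) *
      (𝓕 (hf.toLp f) : Lp ℂ 2 (volume : Measure ℝᵈ)) ((2 * Real.pi)⁻¹ • ξ) := by
  obtain ⟨R, hR, hfhat⟩ := (h.tendstoInMeasure_truncFT hf).exists_seq_tendsto_ae'
  obtain ⟨k, hk, hfourier⟩ :=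
    ((tendstoInMeasure_fourier_indicator_closedBall hf).comp hR).exists_seq_tendsto_ae'
  filter_upwards [hfhat, (Measure.quasiMeasurePreserving_smul volume
    (inv_ne_zero Real.two_pi_pos.ne')).ae hfourier] with ξ hfhatξ hfourierξ
  refine tendsto_nhds_unique (hfhatξ.comp hk) ((hfourierξ.const_mul _).congr fun i ↦ ?_)
  exact (truncFT_eq f _ ξ).symm

-- The cube of half-side `πN` becomes that of half-side `N / 2` because Mathlib's Fourier kernel
-- is `exp (-2πi ⟪x, v⟫)`.
lemma IsL2Fourier.ae_eq_zero_off_Qcube_iff {f fhat : ℝᵈ → ℂ} (h : IsL2Fourier d f fhat)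
    (hf : MemLp f 2) (N : ℝ) :
    (∀ᵐ ξ, ξ ∉ Qcube d (Real.pi * N) → fhat ξ = 0) ↔
      ∀ᵐ v, v ∉ Qcube d (N / 2) → (𝓕 (hf.toLp f) : Lp ℂ 2 (volume : Measure ℝᵈ)) v = 0 := by
  have hr : (2 * Real.pi)⁻¹ ≠ 0 := inv_ne_zero Real.two_pi_pos.ne'
  have hc : (((2 * Real.pi) ^ (-(d : ℝ) / 2) : ℝ) : ℂ) ≠ 0 :=
    mod_cast (Real.rpow_pos_of_pos Real.two_pi_pos _).ne'
  have hside : N / 2 / |(2 * Real.pi)⁻¹| = Real.pi * N := by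
    rw [abs_inv, abs_of_pos Real.two_pi_pos]
    field_simp
  refine (eventually_congr ?_).trans (ae_smul_iff hr)
  filter_upwards [h.ae_eq hf] with ξ hξ
  rw [hξ, smul_mem_Qcube_iff hr, hside, mul_eq_zero, or_iff_right hc]

end Plancherel

/-- For `u₀ ∈ L²(ℝ^d)`, `T > 0`, `N > 0`, the family `(u(T, n/N) f_{N,n})_{n ∈ ℤ^d}` is
summable in `L²(ℝ^d)` with sum `u(T,·)` if and only if `u₀ ∈ 𝒫_N`, i.e. the (Plancherel)
Fourier transform of `u₀` is supported in `Q_{πN}(0)`. -/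
theorem statement3 (d : ℕ) (hd : 0 < d)
    (u₀ : EuclideanSpace ℝ (Fin d) → ℝ) (hmem : MemLp u₀ 2 volume)
    (T N : ℝ) (hT : 0 < T) (hN : 0 < N)
    (u₀hat : EuclideanSpace ℝ (Fin d) → ℂ)
    (hFT : IsL2Fourier d (fun x => (u₀ x : ℂ)) u₀hat) :
    HasSumL2 d (fun n x => heatSol d u₀ T (latticePt d N n) * fN d N n x)
        (fun x => heatSol d u₀ T x)
      ↔ (∀ᵐ ξ ∂(volume : Measure (EuclideanSpace ℝ (Fin d))),
          ξ ∉ Qcube d (Real.pi * N) → u₀hat ξ = 0) := by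
  have hu : MemLp (fun x ↦ (u₀ x : ℂ)) 2 volume := hmem.ofReal
  have hw := Lp.memLp (FourierTransform.fourier (hu.toLp _) : Lp ℂ 2 volume)
  have hsampling := hasSumL2_sampling_iff hN (integrable_heatMultiplier_mul hT hw)
    (memLp_heatMultiplier_mul hT.le hw)
  simp only [mul_eq_zero, heatMultiplier_ne_zero, false_or] at hsampling
  rw [hFT.ae_eq_zero_off_Qcube_iff hu, ← hsampling, ← hasSumL2_ofReal]
  simp only [Complex.ofReal_mul, ofReal_heatSol hT hu]
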